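/- arXiv:math/0610854 — 4 statements merged into one kernel-verified Lean document; each statement's English description precedes it below -/
import Mathlib

section
/- Let T ≥ 1 and let 𝒩_0, 𝒩_1, …, 𝒩_T be subsets of 𝒩 such that 𝒩_0 = {k₀} is a singleton and 𝒩_T = 𝒩. Let α : {0,…,T−1} → [0,1] be such that for every t ∈ {0,…,T−1} and every k ∈ 𝒩_{t+1} one has Σ_{l∈𝒩_t} γ_{k,l}(t) ≥ α(t). Then every solution x of the consensus system satisfies Δ(T) ≤ (1 − ∏_{t=0}^{T−1} α(t))·Δ(0). -/
/-- The diameter of a finite family of reals: max minus min. -/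
noncomputable def diam {N : Type*} [Fintype N] [Nonempty N] (y : N → ℝ) : ℝ :=
  Finset.univ.sup' Finset.univ_nonempty y - Finset.univ.inf' Finset.univ_nonempty y

/-!
Let `P t = ∏ s < t, α s`. An agent of `Ns (t + 1)` puts weight at least `α t` on `Ns t`, and no
value ever drops below the initial minimum `m`. By induction on `t` the agents of `Ns t` therefore
stay above `(1 - P t) * m + P t * m'`, where `m'` is the initial minimum over `Ns 0`; applied to
`-x`, this gives the mirrored upper bound. When the two bounds are subtracted, `Ns 0` contributes
`P t` times its own initial diameter, which vanishes for a singleton.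
-/

open Finset Matrix

section RowStochastic

variable {R N : Type*} [CommRing R] [PartialOrder R] [IsOrderedRing R] [Fintype N] [DecidableEq N]
  {A : Matrix N N R} {y : N → R} {m m' a : R} {S : Finset N} {k : N}

lemma convexCombo_le_mulVec_of_mem_rowStochastic (hA : A ∈ rowStochastic R N)
    (hm : ∀ l, m ≤ y l) (hmm' : m ≤ m') (hm' : ∀ l ∈ S, m' ≤ y l) (ha : a ≤ ∑ l ∈ S, A k l) :
    (1 - a) * m + a * m' ≤ (A *ᵥ y) k := by
  have hexcess : a * (m' - m) ≤ ∑ l, A k l * (y l - m) :=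
    calc a * (m' - m) ≤ (∑ l ∈ S, A k l) * (m' - m) :=
          mul_le_mul_of_nonneg_right ha (sub_nonneg.2 hmm')
      _ = ∑ l ∈ S, A k l * (m' - m) := sum_mul ..
      _ ≤ ∑ l ∈ S, A k l * (y l - m) := sum_le_sum fun l hl =>
          mul_le_mul_of_nonneg_left (sub_le_sub_right (hm' l hl) m) (hA.1 k l)
      _ ≤ ∑ l, A k l * (y l - m) := sum_le_univ_sum_of_nonneg
          fun l => mul_nonneg (hA.1 k l) (sub_nonneg.2 (hm l))
  calc (1 - a) * m + a * m' = m + a * (m' - m) := by ring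
    _ ≤ m + ∑ l, A k l * (y l - m) := add_le_add_right hexcess m
    _ = (A *ᵥ y) k := by
      simp only [mul_sub, sum_sub_distrib, ← sum_mul, sum_row_of_mem_rowStochastic hA, one_mul,
        mulVec, dotProduct, add_sub_cancel]

lemma le_mulVec_of_mem_rowStochastic (hA : A ∈ rowStochastic R N) (hm : ∀ l, m ≤ y l) (k : N) :
    m ≤ (A *ᵥ y) k := by
  simpa using convexCombo_le_mulVec_of_mem_rowStochastic (S := ∅) (k := k) (a := 0) hA hm le_rfl
    (by simp) (by simp)

end RowStochastic

/-- `x` is a solution of the consensus system with update matrices `Γ t`, which need not be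
stochastic. -/
def IsConsensusSolution {R N : Type*} [NonUnitalNonAssocSemiring R] [Fintype N]
    (Γ : ℕ → Matrix N N R) (x : ℕ → N → R) : Prop :=
  ∀ t, x (t + 1) = Γ t *ᵥ x t

namespace IsConsensusSolution

lemma neg {R N : Type*} [NonUnitalNonAssocRing R] [Fintype N] {Γ : ℕ → Matrix N N R}
    {x : ℕ → N → R} (hx : IsConsensusSolution Γ x) : IsConsensusSolution Γ (-x) := fun t => by
  simp only [Pi.neg_apply, hx t, mulVec_neg]

variable {R N : Type*} [CommRing R] [PartialOrder R] [IsOrderedRing R] [Fintype N] [DecidableEq N]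
  {Γ : ℕ → Matrix N N R} {x : ℕ → N → R} {m m' M M' : R} {Ns : ℕ → Finset N} {α : ℕ → R} {t : ℕ}
  {k : N}

lemma le_apply (hx : IsConsensusSolution Γ x) (hΓ : ∀ t, Γ t ∈ rowStochastic R N)
    (hm : ∀ l, m ≤ x 0 l) (t : ℕ) (k : N) : m ≤ x t k := by
  induction t generalizing k with
  | zero => exact hm k
  | succ t ih =>
    rw [hx t]
    exact le_mulVec_of_mem_rowStochastic (hΓ t) ih k

lemma convexCombo_le_apply (hx : IsConsensusSolution Γ x) (hΓ : ∀ t, Γ t ∈ rowStochastic R N)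
    (hα : ∀ s < t, 0 ≤ α s) (hweight : ∀ s < t, ∀ j ∈ Ns (s + 1), α s ≤ ∑ l ∈ Ns s, Γ s j l)
    (hm : ∀ l, m ≤ x 0 l) (hmm' : m ≤ m') (hm' : ∀ l ∈ Ns 0, m' ≤ x 0 l) (hk : k ∈ Ns t) :
    (1 - ∏ s ∈ range t, α s) * m + (∏ s ∈ range t, α s) * m' ≤ x t k := by
  induction t generalizing k with
  | zero => simpa using hm' k hk
  | succ t ih =>
    set P := ∏ s ∈ range t, α s
    have hP : 0 ≤ P := prod_nonneg fun s hs => hα s (Nat.lt_succ_of_lt (mem_range.1 hs))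
    have hbound : ∀ l ∈ Ns t, (1 - P) * m + P * m' ≤ x t l := fun l =>
      ih (fun s hs => hα s (Nat.lt_succ_of_lt hs)) fun s hs => hweight s (Nat.lt_succ_of_lt hs)
    have hm_le : m ≤ (1 - P) * m + P * m' :=
      calc m ≤ m + P * (m' - m) := le_add_of_nonneg_right (mul_nonneg hP (sub_nonneg.2 hmm'))
        _ = (1 - P) * m + P * m' := by ring
    calc (1 - ∏ s ∈ range (t + 1), α s) * m + (∏ s ∈ range (t + 1), α s) * m'
        = (1 - α t) * m + α t * ((1 - P) * m + P * m') := by rw [prod_range_succ]; ring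
      _ ≤ (Γ t *ᵥ x t) k := convexCombo_le_mulVec_of_mem_rowStochastic (hΓ t)
          (hx.le_apply hΓ hm t) hm_le hbound (hweight t t.lt_succ_self k hk)
      _ = x (t + 1) k := by rw [hx t]

lemma apply_le_convexCombo (hx : IsConsensusSolution Γ x) (hΓ : ∀ t, Γ t ∈ rowStochastic R N)
    (hα : ∀ s < t, 0 ≤ α s) (hweight : ∀ s < t, ∀ j ∈ Ns (s + 1), α s ≤ ∑ l ∈ Ns s, Γ s j l)
    (hM : ∀ l, x 0 l ≤ M) (hMM' : M' ≤ M) (hM' : ∀ l ∈ Ns 0, x 0 l ≤ M') (hk : k ∈ Ns t) :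
    x t k ≤ (1 - ∏ s ∈ range t, α s) * M + (∏ s ∈ range t, α s) * M' := by
  have hneg := hx.neg.convexCombo_le_apply hΓ hα hweight (fun l => neg_le_neg (hM l))
    (neg_le_neg hMM') (fun l hl => neg_le_neg (hM' l hl)) hk
  rw [mul_neg, mul_neg, ← neg_add] at hneg
  exact neg_le_neg_iff.1 hneg

end IsConsensusSolution

/-- The diameter of the values of `y` on a nonempty finite set `S`: supremum minus infimum. It
extends `diam` to proper subsets and to lattice-ordered values. -/
def diamOn {R N : Type*} [Sub R] [Lattice R] (S : Finset N) (hS : S.Nonempty) (y : N → R) :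
    R :=
  S.sup' hS y - S.inf' hS y

lemma diam_eq_diamOn_univ {N : Type*} [Fintype N] [Nonempty N] (y : N → ℝ) :
    diam y = diamOn univ univ_nonempty y :=
  rfl

lemma diamOn_singleton {R N : Type*} [AddGroup R] [Lattice R] (k : N) (y : N → R) :
    diamOn {k} (singleton_nonempty k) y = 0 := by
  simp [diamOn]

theorem diam_contraction_single_tree_general {R N : Type*} [CommRing R] [Lattice R]
    [IsOrderedRing R] [Fintype N] [DecidableEq N] [Nonempty N] {Γ : ℕ → Matrix N N R}
    (hΓ : ∀ t, Γ t ∈ rowStochastic R N) {x : ℕ → N → R} (hx : IsConsensusSolution Γ x) {T : ℕ}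
    {Ns : ℕ → Finset N} (hN0 : (Ns 0).Nonempty) (hNT : (Ns T).Nonempty) {α : ℕ → R}
    (hα : ∀ t < T, 0 ≤ α t) (hweight : ∀ t < T, ∀ k ∈ Ns (t + 1), α t ≤ ∑ l ∈ Ns t, Γ t k l) :
    diamOn (Ns T) hNT (x T) ≤ (1 - ∏ t ∈ range T, α t) * diamOn univ univ_nonempty (x 0) +
      (∏ t ∈ range T, α t) * diamOn (Ns 0) hN0 (x 0) := by
  have hupper := sup'_le hNT (x T) fun k hk => hx.apply_le_convexCombo hΓ hα hweight
    (fun l => le_sup' (x 0) (mem_univ l)) (sup'_mono (x 0) (subset_univ _) hN0)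
    (fun l hl => le_sup' (x 0) hl) hk
  have hlower := le_inf' hNT (x T) fun k hk => hx.convexCombo_le_apply hΓ hα hweight
    (fun l => inf'_le (x 0) (mem_univ l)) (inf'_mono (x 0) (subset_univ _) hN0)
    (fun l hl => inf'_le (x 0) hl) hk
  refine (sub_le_sub hupper hlower).trans_eq ?_
  simp only [diamOn]
  ring

/-- Contraction along a single settling spanning-tree: if `𝒩₀ = {k₀}`, `𝒩_T = 𝒩` and
every agent of `𝒩_{t+1}` receives at time `t` a total weight at least `α(t)` from `𝒩_t`,
then `Δ(T) ≤ (1 - ∏ α(t)) Δ(0)`. -/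
theorem diam_contraction_single_tree
    {N : Type*} [Fintype N] [Nonempty N]
    (Γ : ℕ → Matrix N N ℝ)
    (hnn : ∀ t k l, 0 ≤ Γ t k l)
    (hrow : ∀ t k, ∑ l, Γ t k l = 1)
    (T : ℕ) (hT : 1 ≤ T)
    (Ns : ℕ → Finset N) (k₀ : N)
    (hN0 : Ns 0 = {k₀})
    (hNT : Ns T = Finset.univ)
    (α : ℕ → ℝ)
    (hα : ∀ t < T, α t ∈ Set.Icc (0 : ℝ) 1)
    (hmain : ∀ t < T, ∀ k ∈ Ns (t + 1), α t ≤ ∑ l ∈ Ns t, Γ t k l)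
    (x : ℕ → N → ℝ)
    (hx : ∀ t, x (t + 1) = (Γ t).mulVec (x t)) :
    diam (x T) ≤ (1 - ∏ t ∈ Finset.range T, α t) * diam (x 0) := by
  classical
  simpa [hN0, hNT, diamOn_singleton, diam_eq_diamOn_univ] using diam_contraction_single_tree_general
    (fun t => mem_rowStochastic_iff_sum.2 ⟨hnn t, hrow t⟩) hx (hN0 ▸ singleton_nonempty k₀)
    (hNT ▸ univ_nonempty) (fun t ht => (hα t ht).1) hmain
end

section
/- Let T ≥ 1 and let 𝒩_0, 𝒩_1, …, 𝒩_T be subsets of 𝒩 such that 𝒩_0 = {k₀} is a singleton and 𝒩_T = 𝒩, and let α : {0,…,T−1} → [0,1] be such that for every t ∈ {0,…,T−1} and every k ∈ 𝒩_{t+1} one has Σ_{l∈𝒩_t} γ_{k,l}(t) ≥ α(t). Then every entry of the k₀-th column of the ordered matrix product Γ(T−1)·Γ(T−2)···Γ(0) is at least ∏_{t=0}^{T−1} α(t); that is, (Γ(T−1)···Γ(0))_{l,k₀} ≥ ∏_{t=0}^{T−1} α(t) for every l ∈ 𝒩. -/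
/-- The ordered (time-decreasing) product `Γ(T-1) ⬝ Γ(T-2) ⬝ ⋯ ⬝ Γ(0)`. -/
noncomputable def prodRev {N : Type*} [Fintype N] [DecidableEq N]
    (Γ : ℕ → Matrix N N ℝ) : ℕ → Matrix N N ℝ
  | 0 => 1
  | t + 1 => Γ t * prodRev Γ t

/-! Read `∑ l ∈ S, A k l` as the weight which row `k` of `A` puts on `S`. For nonnegative matrices,
lower bounds on weights multiply: if row `k` of `A` puts weight at least `a` on `S` and each row of
`B` in `S` puts weight at least `b` on `U`, then row `k` of `A * B` puts weight at least `a * b` on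
`U`, already from the paths through `S`. Iterating along `Ns T, …, Ns 0` bounds the weight which the
rows of the ordered product put on `Ns 0`; when `Ns 0` is a singleton, that is a single entry. -/

theorem mul_le_sum_matrix_mul_apply {m n p R : Type*} [Fintype n] [Semiring R]
    [PartialOrder R] [IsOrderedRing R] {A : Matrix m n R} {B : Matrix n p R}
    {S : Finset n} {U : Finset p} {a b : R} {i : m}
    (hA : ∀ l, 0 ≤ A i l) (hB : ∀ l, ∀ j ∈ U, 0 ≤ B l j) (hb : 0 ≤ b)
    (ha : a ≤ ∑ l ∈ S, A i l) (hBS : ∀ l ∈ S, b ≤ ∑ j ∈ U, B l j) :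
    a * b ≤ ∑ j ∈ U, (A * B) i j :=
  calc a * b
    _ ≤ (∑ l ∈ S, A i l) * b := mul_le_mul_of_nonneg_right ha hb
    _ = ∑ l ∈ S, A i l * b := Finset.sum_mul ..
    _ ≤ ∑ l ∈ S, A i l * ∑ j ∈ U, B l j :=
      Finset.sum_le_sum fun l hl ↦ mul_le_mul_of_nonneg_left (hBS l hl) (hA l)
    _ ≤ ∑ l, A i l * ∑ j ∈ U, B l j :=
      Finset.sum_le_univ_sum_of_nonneg fun l ↦ mul_nonneg (hA l) (Finset.sum_nonneg (hB l))
    _ = ∑ j ∈ U, (A * B) i j := by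
      simp only [Matrix.mul_apply, Finset.mul_sum]
      exact Finset.sum_comm

section OrderedProduct

variable {N : Type*} [Fintype N] [DecidableEq N] {Γ : ℕ → Matrix N N ℝ} {T : ℕ}

theorem prodRev_apply_nonneg (hnn : ∀ t < T, ∀ k l, 0 ≤ Γ t k l) (k l : N) :
    0 ≤ prodRev Γ T k l := by
  induction T generalizing k l with
  | zero =>
    rw [prodRev, Matrix.one_apply]
    exact ite_nonneg zero_le_one le_rfl
  | succ T ih =>
    rw [prodRev, Matrix.mul_apply']
    exact dotProduct_nonneg_of_nonneg (hnn T T.lt_succ_self k)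
      fun j ↦ ih (fun t ht ↦ hnn t (Nat.lt_succ_of_lt ht)) j l

theorem column_lower_bound_single_tree_general {Ns : ℕ → Finset N} {α : ℕ → ℝ}
    (hnn : ∀ t < T, ∀ k l, 0 ≤ Γ t k l) (hα : ∀ t < T, 0 ≤ α t)
    (hmain : ∀ t < T, ∀ k ∈ Ns (t + 1), α t ≤ ∑ l ∈ Ns t, Γ t k l) {k : N} (hk : k ∈ Ns T) :
    ∏ t ∈ Finset.range T, α t ≤ ∑ l ∈ Ns 0, prodRev Γ T k l := by
  induction T generalizing k with
  | zero => simp [prodRev, Matrix.one_apply, hk]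
  | succ T ih =>
    have hnn' : ∀ t < T, ∀ k l, 0 ≤ Γ t k l := fun t ht ↦ hnn t (Nat.lt_succ_of_lt ht)
    have hα' : ∀ t < T, 0 ≤ α t := fun t ht ↦ hα t (Nat.lt_succ_of_lt ht)
    have hprod : 0 ≤ ∏ t ∈ Finset.range T, α t :=
      Finset.prod_nonneg fun t ht ↦ hα' t (Finset.mem_range.mp ht)
    rw [Finset.prod_range_succ_comm, prodRev]
    exact mul_le_sum_matrix_mul_apply (hnn T T.lt_succ_self k)
      (fun l j _ ↦ prodRev_apply_nonneg hnn' l j) hprod (hmain T T.lt_succ_self k hk)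
      fun l hl ↦ ih hnn' hα' (fun t ht ↦ hmain t (Nat.lt_succ_of_lt ht)) hl

end OrderedProduct

/-- Under the single-spanning-tree hypotheses, every entry of the `k₀`-th column of
`Γ(T-1)⋯Γ(0)` is at least `∏_{t<T} α(t)`. -/
theorem column_lower_bound_single_tree
    {N : Type*} [Fintype N] [Nonempty N] [DecidableEq N]
    (Γ : ℕ → Matrix N N ℝ)
    (hnn : ∀ t k l, 0 ≤ Γ t k l)
    (hrow : ∀ t k, ∑ l, Γ t k l = 1)
    (T : ℕ) (hT : 1 ≤ T)
    (Ns : ℕ → Finset N) (k₀ : N)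
    (hN0 : Ns 0 = {k₀})
    (hNT : Ns T = Finset.univ)
    (α : ℕ → ℝ)
    (hα : ∀ t < T, α t ∈ Set.Icc (0 : ℝ) 1)
    (hmain : ∀ t < T, ∀ k ∈ Ns (t + 1), α t ≤ ∑ l ∈ Ns t, Γ t k l) :
    ∀ l : N, ∏ t ∈ Finset.range T, α t ≤ prodRev Γ T l k₀ := by
  intro l
  simpa only [hN0, Finset.sum_singleton] using column_lower_bound_single_tree_general
    (fun t _ ↦ hnn t) (fun t ht ↦ (hα t ht).1) hmain (hNT ▸ Finset.mem_univ l)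
end

section
/- Let n ≥ 2 and q ≥ 1 be integers and γ ∈ (0,1). Then 1 − γ^{n−1}·Σ_{i=0}^{q−1} (1−γ)^i·C(n+i−2, n−2) = (γ^{n−1}/(n−2)!)·f^{(n−2)}(1−γ), where f is the function f(δ) = δ^{n+q−2}/(1−δ) and f^{(n−2)}(1−γ) denotes its (n−2)-th derivative evaluated at the point δ = 1−γ (which lies in (0,1), where f is smooth). -/
/-!
Modulo the polynomial `∑ j < m + q, δ ^ j`, the function `δ ^ (m + q) / (1 - δ)` is the simple pole
`(1 - δ)⁻¹`, whose `m`-th derivative at `1 - γ` is `m! / γ ^ (m + 1)`. The `m`-th derivative kills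
the terms of the polynomial with `j < m` and turns `δ ^ (m + i)` into
`m! * (m + i).choose m * δ ^ i`. Multiplying by `γ ^ (m + 1) / m!` with `m = n - 2` gives the claim.
-/

open Finset Topology

open scoped Nat

theorem pow_div_one_sub_eq_inv_sub_geom_sum {K : Type*} [Field K] {x : K} (hx : x ≠ 1) (N : ℕ) :
    x ^ N / (1 - x) = (1 - x)⁻¹ - ∑ j ∈ range N, x ^ j := by
  have hx' : 1 - x ≠ 0 := sub_ne_zero.mpr hx.symm
  rw [div_eq_iff hx', sub_mul, inv_mul_cancel₀ hx', geom_sum_mul_neg, sub_sub_cancel]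

theorem sum_range_add_pow_sub_mul_choose {R : Type*} [Semiring R] (m q : ℕ) (x : R) :
    ∑ j ∈ range (m + q), x ^ (j - m) * (j.choose m : R) =
      ∑ i ∈ range q, x ^ i * ((m + i).choose m : R) := by
  have hlow : ∑ j ∈ range m, x ^ (j - m) * (j.choose m : R) = 0 :=
    sum_eq_zero fun j hj => by simp [Nat.choose_eq_zero_of_lt (mem_range.mp hj)]
  simp only [sum_range_add, hlow, zero_add, Nat.add_sub_cancel_left]

section IteratedDeriv

variable {𝕜 : Type*} [NontriviallyNormedField 𝕜]

theorem iteratedDeriv_inv_const_sub (m : ℕ) (c x : 𝕜) :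
    iteratedDeriv m (fun δ : 𝕜 => (c - δ)⁻¹) x = m ! * ((c - x) ^ (m + 1))⁻¹ := by
  have hpow : (c - x) ^ (-1 - m : ℤ) = ((c - x) ^ (m + 1))⁻¹ := by
    rw [← zpow_natCast, ← zpow_neg, Nat.cast_add_one, neg_add']
    ring_nf
  have hsign : (-1 : 𝕜) ^ m * (-1) ^ m = 1 := by rw [← mul_pow, neg_one_mul, neg_neg, one_pow]
  calc iteratedDeriv m (fun δ : 𝕜 => (c - δ)⁻¹) x
      = (-1) ^ m * iteratedDeriv m Inv.inv (c - x) :=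
        congrFun (iteratedDeriv_comp_const_sub m Inv.inv c) x
    _ = (-1) ^ m * ((-1) ^ m * m ! * ((c - x) ^ (m + 1))⁻¹) := by
        rw [iteratedDeriv_eq_iterate, iter_deriv_inv, hpow]
    _ = m ! * ((c - x) ^ (m + 1))⁻¹ := by rw [← mul_assoc, ← mul_assoc, hsign, one_mul]

theorem iteratedDeriv_sum_pow (m : ℕ) (s : Finset ℕ) (x : 𝕜) :
    iteratedDeriv m (fun δ : 𝕜 => ∑ j ∈ s, δ ^ j) x =
      m ! * ∑ j ∈ s, x ^ (j - m) * (j.choose m : 𝕜) := by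
  rw [iteratedDeriv_fun_sum fun j _ => by fun_prop, mul_sum]
  refine sum_congr rfl fun j _ => ?_
  rw [iteratedDeriv_pow, Nat.descFactorial_eq_factorial_mul_choose, Nat.cast_mul, mul_assoc,
    mul_comm (j.choose m : 𝕜)]

theorem iteratedDeriv_pow_div_one_sub (m N : ℕ) {x : 𝕜} (hx : x ≠ 1) :
    iteratedDeriv m (fun δ : 𝕜 => δ ^ N / (1 - δ)) x =
      m ! * (((1 - x) ^ (m + 1))⁻¹ - ∑ j ∈ range N, x ^ (j - m) * (j.choose m : 𝕜)) := by
  have hsplit : (fun δ : 𝕜 => δ ^ N / (1 - δ)) =ᶠ[𝓝 x]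
      fun δ => (1 - δ)⁻¹ - ∑ j ∈ range N, δ ^ j := by
    filter_upwards [isOpen_ne.mem_nhds hx] with δ hδ
    exact pow_div_one_sub_eq_inv_sub_geom_sum hδ N
  have hpole : ContDiffAt 𝕜 m (fun δ : 𝕜 => (1 - δ)⁻¹) x :=
    (contDiffAt_const.sub contDiffAt_id).inv (sub_ne_zero.mpr hx.symm)
  rw [hsplit.iteratedDeriv_eq, iteratedDeriv_fun_sub hpole (by fun_prop),
    iteratedDeriv_inv_const_sub, iteratedDeriv_sum_pow, mul_sub]

theorem one_sub_sum_eq_iteratedDeriv_general [CharZero 𝕜]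
    (n q : ℕ) (hn : 2 ≤ n) {γ : 𝕜} (hγ : γ ≠ 0) :
    1 - γ ^ (n - 1) *
        ∑ i ∈ range q, (1 - γ) ^ i * (Nat.choose (n + i - 2) (n - 2) : 𝕜) =
      γ ^ (n - 1) / ((n - 2)! : 𝕜) *
        iteratedDeriv (n - 2) (fun δ : 𝕜 => δ ^ (n + q - 2) / (1 - δ)) (1 - γ) := by
  obtain ⟨m, rfl⟩ := Nat.exists_eq_add_of_le hn
  have hexp : 2 + m - 1 = m + 1 := by lia
  have hadd (k : ℕ) : 2 + m + k - 2 = m + k := by lia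
  have hfact : (m ! : 𝕜) ≠ 0 := Nat.cast_ne_zero.mpr m.factorial_ne_zero
  have hpole : 1 - γ ≠ 1 := by simpa using hγ
  simp only [hexp, hadd, Nat.add_sub_cancel_left]
  rw [iteratedDeriv_pow_div_one_sub m (m + q) hpole, sum_range_add_pow_sub_mul_choose,
    sub_sub_cancel, ← mul_assoc, div_mul_cancel₀ _ hfact, mul_sub,
    mul_inv_cancel₀ (pow_ne_zero _ hγ)]

end IteratedDeriv

/-- The closed-form identity
`1 - γ^{n-1} Σ_{i=0}^{q-1} (1-γ)^i C(n+i-2, n-2)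
  = (γ^{n-1}/(n-2)!) dⁿ⁻²/dδⁿ⁻² [δ^{n+q-2}/(1-δ)] |_{δ = 1-γ}`. -/
theorem one_sub_sum_eq_iteratedDeriv
    (n q : ℕ) (hn : 2 ≤ n) (hq : 1 ≤ q) (γ : ℝ) (hγ : γ ∈ Set.Ioo (0 : ℝ) 1) :
    1 - γ ^ (n - 1) *
        ∑ i ∈ Finset.range q, (1 - γ) ^ i * (Nat.choose (n + i - 2) (n - 2) : ℝ) =
      γ ^ (n - 1) / (Nat.factorial (n - 2) : ℝ) *
        iteratedDeriv (n - 2) (fun δ : ℝ => δ ^ (n + q - 2) / (1 - δ)) (1 - γ) :=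
  one_sub_sum_eq_iteratedDeriv_general n q hn hγ.1.ne'
end

section
/- Let n ≥ 2 be an integer and γ ∈ (0,1). For each integer q ≥ 1 set s_q = γ^{n−1}·Σ_{i=0}^{q−1} (1−γ)^i·C(n+i−2, n−2). Then: (i) 0 < s_q < 1 for every q ≥ 1, so that ρ̃_q = (1 − s_q)^{1/(n+q−2)} is a well-defined number in (0,1); (ii) ρ̃_q → 1−γ as q → ∞; (iii) more precisely, (ρ̃_q − (1−γ) − (n−2)(1−γ)·(ln q)/q) / ((ln q)/q) → 0 as q → ∞, i.e. ρ̃_q = (1−γ) + (n−2)(1−γ)·(ln q)/q + o((ln q)/q). -/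
/-- `s_q = γ^{n-1} Σ_{i=0}^{q-1} (1-γ)^i C(n+i-2, n-2)`. -/
noncomputable def sQ (n : ℕ) (γ : ℝ) (q : ℕ) : ℝ :=
  γ ^ (n - 1) * ∑ i ∈ Finset.range q, (1 - γ) ^ i * (Nat.choose (n + i - 2) (n - 2) : ℝ)

/-- `ρ̃_q = (1 - s_q)^{1/(n+q-2)}` (real power). -/
noncomputable def rhoQ (n : ℕ) (γ : ℝ) (q : ℕ) : ℝ :=
  (1 - sQ n γ q) ^ (((n + q - 2 : ℕ) : ℝ)⁻¹)

/-!
The number `1 - s_q` is `γ^(m+1)`, `m = n - 2`, times the tail from `q` on of the negative binomial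
series `∑ C(i+m, m) (1-γ)^i = γ^(-m-1)`. The tail is of the same order as its first term, because
`(i+q+1)^m ≤ (i+1)^m (q+1)^m`, so `1 - s_q` is of exact order `q^m (1-γ)^q`, and
`ln (1 - s_q) = q ln (1-γ) + m ln q + O(1)`. Dividing by `n + q - 2` gives
`ln ρ̃_q = ln (1-γ) + m (ln q)/q + o((ln q)/q)`, and the differentiability of `exp` at `ln (1-γ)`
turns this into the expansion of `ρ̃_q`.
-/

open Filter Topology Asymptotics Nat

section FirstOrderExpansion

variable {α 𝕜 : Type*} [NontriviallyNormedField 𝕜] {l : Filter α} {u ε : α → 𝕜} {x v : 𝕜}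

theorem tendsto_of_tendsto_sub_div (hε : Tendsto ε l (𝓝 0)) (hε₀ : ∀ᶠ t in l, ε t ≠ 0)
    (hu : Tendsto (fun t => (u t - x) / ε t) l (𝓝 v)) : Tendsto u l (𝓝 x) := by
  have hmul : Tendsto (fun t => (u t - x) / ε t * ε t + x) l (𝓝 x) := by
    simpa using (hu.mul hε).add_const x
  refine hmul.congr' ?_
  filter_upwards [hε₀] with t ht
  rw [div_mul_cancel₀ _ ht, sub_add_cancel]

theorem tendsto_comp_sub_div_of_hasDerivAt {f : 𝕜 → 𝕜} {f' : 𝕜} (hf : HasDerivAt f f' x)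
    (hux : Tendsto u l (𝓝 x)) (hu : Tendsto (fun t => (u t - x) / ε t) l (𝓝 v)) :
    Tendsto (fun t => (f (u t) - f x) / ε t) l (𝓝 (v * f')) := by
  have hd : Tendsto (fun t => u t - x) l (𝓝 0) := by simpa using hux.sub_const x
  have hcd : Tendsto (fun t => (ε t)⁻¹ • (u t - x)) l (𝓝 v) := by
    simpa only [smul_eq_mul, inv_mul_eq_div] using hu
  simpa [inv_mul_eq_div] using
    hf.hasFDerivAt.hasFDerivWithinAt.lim hd (.of_forall fun _ => Set.mem_univ _) hcd

end FirstOrderExpansion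

theorem tendsto_log_natCast_atTop : Tendsto (fun q : ℕ => Real.log q) atTop atTop :=
  Real.tendsto_log_atTop.comp tendsto_natCast_atTop_atTop

theorem tendsto_log_natCast_div_natCast : Tendsto (fun q : ℕ => Real.log q / q) atTop (𝓝 0) :=
  Real.isLittleO_log_id_atTop.tendsto_div_nhds_zero.comp tendsto_natCast_atTop_atTop

theorem eventually_log_natCast_div_natCast_ne_zero :
    ∀ᶠ q : ℕ in atTop, Real.log q / q ≠ 0 := by
  filter_upwards [eventually_ge_atTop 2] with q hq
  have hlog : 0 < Real.log q := Real.log_pos (mod_cast hq)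
  positivity

theorem isTheta_natCast_add_one : (fun q : ℕ => (q + 1 : ℝ)) =Θ[atTop] fun q : ℕ => (q : ℝ) :=
  (isTheta_refl _ _).add_isLittleO
    ((isLittleO_const_id_atTop (1 : ℝ)).comp_tendsto tendsto_natCast_atTop_atTop)

theorem isBigO_log_sub_log_of_isTheta {α : Type*} {l : Filter α} {f g : α → ℝ} (h : f =Θ[l] g) :
    (fun t => Real.log (f t) - Real.log (g t)) =O[l] fun _ => (1 : ℝ) := by
  obtain ⟨C, hC, hfg⟩ := h.1.exists_pos
  obtain ⟨D, hD, hgf⟩ := h.2.exists_pos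
  refine IsBigO.of_bound (max |Real.log C| |Real.log D|) ?_
  filter_upwards [hfg.bound, hgf.bound, h.eq_zero_iff] with t hft hgt hzero
  rcases eq_or_ne (g t) 0 with hg | hg
  · simp [hg, hzero.mpr hg]
  have hf : f t ≠ 0 := mt hzero.mp hg
  have hle : Real.log (f t) ≤ Real.log C + Real.log (g t) := by
    rw [← Real.log_abs (f t), ← Real.log_abs (g t), ← Real.log_mul hC.ne' (abs_ne_zero.mpr hg)]
    exact Real.log_le_log (abs_pos.mpr hf) hft
  have hge : Real.log (g t) ≤ Real.log D + Real.log (f t) := by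
    rw [← Real.log_abs (f t), ← Real.log_abs (g t), ← Real.log_mul hD.ne' (abs_ne_zero.mpr hf)]
    exact Real.log_le_log (abs_pos.mpr hg) hgt
  rw [norm_one, mul_one, Real.norm_eq_abs, abs_sub_le_iff]
  exact ⟨le_max_of_le_left (by linarith [le_abs_self (Real.log C)]),
    le_max_of_le_right (by linarith [le_abs_self (Real.log D)])⟩

section RootAsymptotics

variable {a : ℕ → ℝ} {r x : ℝ}

theorem tendsto_log_sub_mul_log_div_log (hx : 0 < x)
    (h : a =Θ[atTop] fun q : ℕ => (q : ℝ) ^ r * x ^ q) :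
    Tendsto (fun q : ℕ => (Real.log (a q) - q * Real.log x) / Real.log q) atTop (𝓝 r) := by
  have herr := ((isBigO_log_sub_log_of_isTheta h).trans_isLittleO
    ((isLittleO_one_left_iff ℝ).mpr
      (tendsto_norm_atTop_atTop.comp tendsto_log_natCast_atTop))).tendsto_div_nhds_zero
  refine (zero_add r ▸ herr.add_const r).congr' ?_
  filter_upwards [eventually_ge_atTop 2] with q hq
  have hq₀ : (0 : ℝ) < q := by positivity
  have hlog : Real.log q ≠ 0 := (Real.log_pos (mod_cast hq)).ne'
  rw [Real.log_mul (by positivity) (by positivity), Real.log_rpow hq₀, Real.log_pow]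
  field_simp
  ring

theorem tendsto_log_div_sub_log_div (hx : 0 < x) (c : ℝ)
    (h : a =Θ[atTop] fun q : ℕ => (q : ℝ) ^ r * x ^ q) :
    Tendsto (fun q : ℕ => (Real.log (a q) / (q + c) - Real.log x) / (Real.log q / q))
      atTop (𝓝 r) := by
  have hconst : Tendsto (fun q : ℕ => c * Real.log x / Real.log q) atTop (𝓝 0) :=
    tendsto_log_natCast_atTop.const_div_atTop _
  have hlim := ((tendsto_log_sub_mul_log_div_log hx h).sub hconst).mul
    (tendsto_natCast_div_add_atTop c)
  rw [sub_zero, mul_one] at hlim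
  refine hlim.congr' ?_
  filter_upwards [eventually_ge_atTop 2,
    (tendsto_atTop_add_const_right _ c tendsto_natCast_atTop_atTop).eventually_gt_atTop 0]
    with q hq hqc
  have hlog : Real.log q ≠ 0 := (Real.log_pos (mod_cast hq)).ne'
  field_simp
  ring

theorem tendsto_rpow_inv_sub_div_log_div (hx : 0 < x) (c : ℝ) (ha : ∀ᶠ q in atTop, 0 < a q)
    (h : a =Θ[atTop] fun q : ℕ => (q : ℝ) ^ r * x ^ q) :
    Tendsto (fun q : ℕ => (a q ^ (q + c : ℝ)⁻¹ - x) / (Real.log q / q)) atTop (𝓝 (r * x)) := by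
  have hlog := tendsto_log_div_sub_log_div hx c h
  have hexp := tendsto_comp_sub_div_of_hasDerivAt (Real.hasDerivAt_exp (Real.log x))
    (tendsto_of_tendsto_sub_div tendsto_log_natCast_div_natCast
      eventually_log_natCast_div_natCast_ne_zero hlog) hlog
  rw [Real.exp_log hx] at hexp
  refine hexp.congr' ?_
  filter_upwards [ha] with q hq
  rw [Real.rpow_def_of_pos hq, div_eq_mul_inv (Real.log (a q))]

end RootAsymptotics

section NegBinomialTail

theorem add_one_pow_le_factorial_mul_choose (m q : ℕ) :
    (q + 1) ^ m ≤ m ! * (q + m).choose m := by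
  rw [← Nat.descFactorial_eq_factorial_mul_choose]
  simpa [show q + m + 1 - m = q + 1 by lia] using Nat.pow_sub_le_descFactorial (q + m) m

theorem choose_add_add_le_factorial_mul (m q i : ℕ) :
    (i + q + m).choose m ≤ m ! * (q + 1) ^ m * (i + m).choose m :=
  calc (i + q + m).choose m
      ≤ (i + q + 1) ^ m := Nat.choose_add_le_add_one_pow _ _
    _ ≤ ((q + 1) * (i + 1)) ^ m := by gcongr; nlinarith [Nat.zero_le (q * i)]
    _ = (q + 1) ^ m * (i + 1) ^ m := mul_pow _ _ _
    _ ≤ (q + 1) ^ m * (m ! * (i + m).choose m) := by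
      gcongr; exact add_one_pow_le_factorial_mul_choose m i
    _ = m ! * (q + 1) ^ m * (i + m).choose m := by ring

/-- The tail `∑_{j ≥ q} C(j+m, m) x^j` of the negative binomial series of `(1-x)^(-m-1)`,
indexed by `j = i + q`; up to the factor `γ^(m+1)` it is `1 - s_q` when `m = n - 2` and `x = 1 - γ`.
Where the series diverges, the `tsum` takes the junk value `0`. -/
noncomputable def negBinomialTail (m : ℕ) (x : ℝ) (q : ℕ) : ℝ :=
  ∑' i : ℕ, ((i + q + m).choose m : ℝ) * x ^ (i + q)

variable {x : ℝ} (m q : ℕ)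

theorem summable_negBinomialTail (hx : ‖x‖ < 1) :
    Summable fun i : ℕ => ((i + q + m).choose m : ℝ) * x ^ (i + q) :=
  (summable_choose_mul_geometric_of_norm_lt_one m hx).comp_injective (add_left_injective q)

theorem sum_range_add_negBinomialTail (hx : ‖x‖ < 1) :
    ∑ i ∈ Finset.range q, ((i + m).choose m : ℝ) * x ^ i + negBinomialTail m x q =
      1 / (1 - x) ^ (m + 1) :=
  ((summable_choose_mul_geometric_of_norm_lt_one m hx).sum_add_tsum_nat_add q).trans
    (tsum_choose_mul_geometric_of_norm_lt_one m hx)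

theorem choose_mul_pow_le_negBinomialTail (hx₀ : 0 ≤ x) (hx₁ : x < 1) :
    ((q + m).choose m : ℝ) * x ^ q ≤ negBinomialTail m x q := by
  have hx : ‖x‖ < 1 := by rwa [Real.norm_of_nonneg hx₀]
  simpa [negBinomialTail] using (summable_negBinomialTail m q hx).le_tsum 0 fun i _ => by positivity

theorem negBinomialTail_pos (hx₀ : 0 < x) (hx₁ : x < 1) : 0 < negBinomialTail m x q := by
  have hchoose : (0 : ℝ) < (q + m).choose m := mod_cast Nat.choose_pos (by lia)
  exact lt_of_lt_of_le (by positivity) (choose_mul_pow_le_negBinomialTail m q hx₀.le hx₁)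

theorem negBinomialTail_le (hx₀ : 0 ≤ x) (hx₁ : x < 1) :
    negBinomialTail m x q ≤ m ! / (1 - x) ^ (m + 1) * ((q + 1) ^ m * x ^ q) := by
  have hx : ‖x‖ < 1 := by rwa [Real.norm_of_nonneg hx₀]
  have hmajorant := (hasSum_choose_mul_geometric_of_norm_lt_one m hx).mul_left
    (m ! * (q + 1) ^ m * x ^ q : ℝ)
  have hterm (i : ℕ) : ((i + q + m).choose m : ℝ) * x ^ (i + q) ≤
      m ! * (q + 1) ^ m * x ^ q * ((i + m).choose m * x ^ i) := by
    have hchoose : ((i + q + m).choose m : ℝ) ≤ m ! * (q + 1) ^ m * (i + m).choose m :=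
      mod_cast choose_add_add_le_factorial_mul m q i
    calc ((i + q + m).choose m : ℝ) * x ^ (i + q)
        ≤ m ! * (q + 1) ^ m * (i + m).choose m * x ^ (i + q) := by gcongr
      _ = m ! * (q + 1) ^ m * x ^ q * ((i + m).choose m * x ^ i) := by ring
  calc negBinomialTail m x q
      ≤ m ! * (q + 1) ^ m * x ^ q * (1 / (1 - x) ^ (m + 1)) :=
        hasSum_le hterm (summable_negBinomialTail m q hx).hasSum hmajorant
    _ = m ! / (1 - x) ^ (m + 1) * ((q + 1) ^ m * x ^ q) := by ring

theorem negBinomialTail_isTheta (hx₀ : 0 < x) (hx₁ : x < 1) :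
    negBinomialTail m x =Θ[atTop] fun q : ℕ => (q : ℝ) ^ m * x ^ q := by
  have hshift : negBinomialTail m x =Θ[atTop] fun q : ℕ => (q + 1 : ℝ) ^ m * x ^ q := by
    constructor
    · refine IsBigO.of_bound (m ! / (1 - x) ^ (m + 1)) (.of_forall fun q => ?_)
      rw [Real.norm_of_nonneg (negBinomialTail_pos m q hx₀ hx₁).le,
        Real.norm_of_nonneg (by positivity)]
      exact negBinomialTail_le m q hx₀.le hx₁
    · refine IsBigO.of_bound (m !) (.of_forall fun q => ?_)
      rw [Real.norm_of_nonneg (negBinomialTail_pos m q hx₀ hx₁).le,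
        Real.norm_of_nonneg (by positivity)]
      have hpow : (q + 1 : ℝ) ^ m ≤ m ! * (q + m).choose m :=
        mod_cast add_one_pow_le_factorial_mul_choose m q
      calc (q + 1 : ℝ) ^ m * x ^ q
          ≤ m ! * (q + m).choose m * x ^ q := by gcongr
        _ = m ! * ((q + m).choose m * x ^ q) := mul_assoc _ _ _
        _ ≤ m ! * negBinomialTail m x q := by
          gcongr; exact choose_mul_pow_le_negBinomialTail m q hx₀.le hx₁
  exact hshift.trans ((isTheta_natCast_add_one.pow m).mul (isTheta_refl _ _))

end NegBinomialTail

section RhoQ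

variable {γ : ℝ} (m q : ℕ)

theorem sQ_pos (n : ℕ) {q : ℕ} (hγ : γ ∈ Set.Ioo (0 : ℝ) 1) (hq : 1 ≤ q) : 0 < sQ n γ q := by
  have hγ₁ : 0 < 1 - γ := sub_pos.mpr hγ.2
  have hterm (i : ℕ) : 0 < (1 - γ) ^ i * ((n + i - 2).choose (n - 2) : ℝ) :=
    mul_pos (pow_pos hγ₁ i) (mod_cast Nat.choose_pos (by lia))
  exact mul_pos (pow_pos hγ.1 _)
    (Finset.sum_pos (fun i _ => hterm i) (Finset.nonempty_range_iff.mpr (by lia)))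

theorem sQ_add_two : sQ (m + 2) γ q =
    γ ^ (m + 1) * ∑ i ∈ Finset.range q, ((i + m).choose m : ℝ) * (1 - γ) ^ i := by
  simp only [sQ, show ∀ i, m + 2 + i - 2 = i + m by lia, Nat.add_sub_cancel,
    show m + 2 - 1 = m + 1 by lia, mul_comm]

theorem rhoQ_add_two : rhoQ (m + 2) γ q = (1 - sQ (m + 2) γ q) ^ (q + m : ℝ)⁻¹ := by
  rw [rhoQ, show m + 2 + q - 2 = q + m by lia, Nat.cast_add]

theorem one_sub_sQ_add_two (hγ : γ ∈ Set.Ioo (0 : ℝ) 1) :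
    1 - sQ (m + 2) γ q = γ ^ (m + 1) * negBinomialTail m (1 - γ) q := by
  have hγ₀ := hγ.1
  have hnorm : ‖1 - γ‖ < 1 := by
    rw [Real.norm_of_nonneg (sub_nonneg.mpr hγ.2.le)]
    linarith
  have hseries := sum_range_add_negBinomialTail m q hnorm
  rw [sub_sub_cancel] at hseries
  rw [sQ_add_two, eq_sub_of_add_eq' hseries, mul_sub, mul_one_div_cancel (by positivity)]

theorem one_sub_sQ_pos (hγ : γ ∈ Set.Ioo (0 : ℝ) 1) : 0 < 1 - sQ (m + 2) γ q := by
  rw [one_sub_sQ_add_two m q hγ]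
  exact mul_pos (pow_pos hγ.1 _) (negBinomialTail_pos m q (by linarith [hγ.2]) (by linarith [hγ.1]))

theorem rhoQ_mem_Ioo {q : ℕ} (hγ : γ ∈ Set.Ioo (0 : ℝ) 1) (hq : 1 ≤ q) :
    rhoQ (m + 2) γ q ∈ Set.Ioo (0 : ℝ) 1 := by
  have hpos := one_sub_sQ_pos m q hγ
  rw [rhoQ_add_two]
  exact ⟨Real.rpow_pos_of_pos hpos _,
    Real.rpow_lt_one hpos.le (by linarith [sQ_pos (m + 2) hγ hq]) (by positivity)⟩

theorem one_sub_sQ_isTheta (hγ : γ ∈ Set.Ioo (0 : ℝ) 1) :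
    (fun q => 1 - sQ (m + 2) γ q) =Θ[atTop] fun q : ℕ => (q : ℝ) ^ (m : ℝ) * (1 - γ) ^ q := by
  simp only [one_sub_sQ_add_two m _ hγ, Real.rpow_natCast]
  exact (isTheta_const_mul_left (pow_pos hγ.1 _).ne').mpr
    (negBinomialTail_isTheta m (by linarith [hγ.2]) (by linarith [hγ.1]))

theorem tendsto_rhoQ_sub_div (hγ : γ ∈ Set.Ioo (0 : ℝ) 1) :
    Tendsto (fun q : ℕ => (rhoQ (m + 2) γ q - (1 - γ)) / (Real.log q / q))
      atTop (𝓝 (m * (1 - γ))) := by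
  simp only [rhoQ_add_two]
  exact tendsto_rpow_inv_sub_div_log_div (sub_pos.mpr hγ.2) m
    (.of_forall fun q => one_sub_sQ_pos m q hγ) (one_sub_sQ_isTheta m hγ)

end RhoQ

/-- Lemma 4 (asymptotics): (i) `0 < s_q < 1`, so `ρ̃_q ∈ (0,1)` is well defined;
(ii) `ρ̃_q → 1-γ` as `q → ∞`;
(iii) `ρ̃_q = (1-γ) + (n-2)(1-γ) (ln q)/q + o((ln q)/q)`. -/
theorem rhoQ_asymptotics
    (n : ℕ) (hn : 2 ≤ n) (γ : ℝ) (hγ : γ ∈ Set.Ioo (0 : ℝ) 1) :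
    (∀ q : ℕ, 1 ≤ q →
      0 < sQ n γ q ∧ sQ n γ q < 1 ∧ rhoQ n γ q ∈ Set.Ioo (0 : ℝ) 1) ∧
    Filter.Tendsto (fun q : ℕ => rhoQ n γ q) Filter.atTop (nhds (1 - γ)) ∧
    Filter.Tendsto (fun q : ℕ =>
        (rhoQ n γ q - (1 - γ) - ((n : ℝ) - 2) * (1 - γ) * Real.log q / q) /
          (Real.log q / q))
      Filter.atTop (nhds 0) := by
  obtain ⟨m, rfl⟩ := Nat.exists_eq_add_of_le' hn
  have hlim := tendsto_rhoQ_sub_div m hγ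
  refine ⟨fun q hq => ⟨sQ_pos (m + 2) hγ hq, sub_pos.mp (one_sub_sQ_pos m q hγ),
    rhoQ_mem_Ioo m hγ hq⟩,
    tendsto_of_tendsto_sub_div tendsto_log_natCast_div_natCast
      eventually_log_natCast_div_natCast_ne_zero hlim, ?_⟩
  refine (sub_self (m * (1 - γ)) ▸ hlim.sub_const (m * (1 - γ))).congr' ?_
  filter_upwards [eventually_log_natCast_div_natCast_ne_zero] with q hq
  rw [mul_div_assoc, sub_div (rhoQ (m + 2) γ q - (1 - γ)), mul_div_cancel_right₀ _ hq]
  push_cast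
  ring
end
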